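/- arXiv:2306.12162 — 2 statements merged into one kernel-verified Lean document; each statement's English description precedes it below -/
import Mathlib

section
/- Let d be a graph pseudometric on a set X with edge set E, let xy ∈ [X]² \ E, let r be a real number with ď(x,y) ≤ r ≤ d̂(x,y), and let D = d ∪ {⟨xy,r⟩}. Then for all u, v ∈ X with d̂(u,v) ≠ D̂(u,v), we have D̂(u,v) = r + d̈(xy,uv) and d̂(u,v) − (d̂(x,y) − r) ≤ D̂(u,v). -/
open scoped Classical

universe u

namespace GraphMetricPaper

variable {X : Type u}

/-- The vertex set `V = ⋃ E` of a graph given by an adjacency relation `E`. -/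
def Vtx (E : X → X → Prop) : Set X := {x | ∃ y, E x y}

/-- Two points are joined by a walk in the graph `E`. -/
def Joined (E : X → X → Prop) (x y : X) : Prop :=
  ∃ (n : ℕ) (c : ℕ → X), c 0 = x ∧ c n = y ∧ ∀ i, i < n → E (c i) (c (i + 1))

/-- The set of weights of walks from `x` to `y`. -/
def walkSums (E : X → X → Prop) (d : X → X → ℝ) (x y : X) : Set ℝ :=
  {s | ∃ (n : ℕ) (c : ℕ → X), c 0 = x ∧ c n = y ∧ (∀ i, i < n → E (c i) (c (i + 1))) ∧
    s = ∑ i ∈ Finset.range n, d (c i) (c (i + 1))}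

/-- The shortest-path pseudometric `d̂` determined by a weight function `d` on a graph `E`. -/
noncomputable def hatd (E : X → X → Prop) (d : X → X → ℝ) (x y : X) : ℝ :=
  sInf (walkSums E d x y)

/-- The function `ď` bounding the possible extensions of `d` from below:
`ď(x,y) = sup_{ab ∈ E} max {0, d(ab) - d̂(a,x) - d̂(y,b)}`. -/
noncomputable def checkd (E : X → X → Prop) (d : X → X → ℝ) (x y : X) : ℝ :=
  sSup ({0} ∪ {r | ∃ a b, E a b ∧ r = d a b - hatd E d a x - hatd E d y b})

/-- The pseudometric `d̈` on doubletons: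
`d̈(xy,uv) = min {d̂(x,u) + d̂(y,v), d̂(x,v) + d̂(y,u)}`. -/
noncomputable def ddot (E : X → X → Prop) (d : X → X → ℝ) (x y u v : X) : ℝ :=
  min (hatd E d x u + hatd E d y v) (hatd E d x v + hatd E d y u)

/-- `d` is a graph pseudometric with edge relation `E`:  `E` is a (symmetric, irreflexive)
connected graph, `d` is a nonnegative symmetric weight on the edges, and `d = d̂` on edges. -/
structure IsGraphPseudometric (E : X → X → Prop) (d : X → X → ℝ) : Prop where
  symm : ∀ ⦃a b⦄, E a b → E b a
  irrefl : ∀ a, ¬ E a a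
  wt_symm : ∀ ⦃a b⦄, E a b → d a b = d b a
  nonneg : ∀ ⦃a b⦄, E a b → 0 ≤ d a b
  connected : ∀ x ∈ Vtx E, ∀ y ∈ Vtx E, Joined E x y
  edge_eq : ∀ ⦃a b⦄, E a b → d a b = hatd E d a b

/-- A graph metric is a graph pseudometric with strictly positive weights. -/
def IsGraphMetric (E : X → X → Prop) (d : X → X → ℝ) : Prop :=
  IsGraphPseudometric E d ∧ ∀ ⦃a b⦄, E a b → 0 < d a b

/-- A floppy graph pseudometric: `ď(x,y) < d̂(x,y)` for every `xy ∈ [V]² \ E`. -/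
def FloppyPseudometric (E : X → X → Prop) (d : X → X → ℝ) : Prop :=
  IsGraphPseudometric E d ∧
    ∀ x ∈ Vtx E, ∀ y ∈ Vtx E, x ≠ y → ¬ E x y → checkd E d x y < hatd E d x y

/-- A floppy graph metric: `ď(x,y) < d̂(x,y)` for every `xy ∈ [V]² \ E`. -/
def FloppyMetric (E : X → X → Prop) (d : X → X → ℝ) : Prop :=
  IsGraphMetric E d ∧
    ∀ x ∈ Vtx E, ∀ y ∈ Vtx E, x ≠ y → ¬ E x y → checkd E d x y < hatd E d x y

/-- The edge relation of the one-step extension `E ∪ {xy}`. -/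
def extEdge (E : X → X → Prop) (x y : X) : X → X → Prop :=
  fun a b => E a b ∨ (a = x ∧ b = y) ∨ (a = y ∧ b = x)

/-- The weight function of the one-step extension `d ∪ {⟨xy, r⟩}`. -/
noncomputable def extWt (d : X → X → ℝ) (x y : X) (r : ℝ) : X → X → ℝ :=
  fun a b => if (a = x ∧ b = y) ∨ (a = y ∧ b = x) then r else d a b

/-- The set `[V]² \ E` of unordered pairs of distinct vertices that are not edges. -/
def nonEdgePairs (E : X → X → Prop) : Set (Sym2 X) :=
  {e | ∃ a b : X, e = s(a, b) ∧ a ≠ b ∧ a ∈ Vtx E ∧ b ∈ Vtx E ∧ ¬ E a b}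

/-- A set of (unordered) weighted pairs, presented as a relation `R`, is a full metric
on `V`: it is symmetric, its domain is exactly `[V]²`, it is single-valued, positive,
and satisfies the triangle inequality. -/
def IsFullMetricRel (V : Set X) (R : X → X → ℝ → Prop) : Prop :=
  (∀ a b r, R a b r → R b a r) ∧
  (∀ a b r, R a b r → a ∈ V ∧ b ∈ V ∧ a ≠ b) ∧
  (∀ a b, a ∈ V → b ∈ V → a ≠ b → ∃ r, R a b r) ∧
  (∀ a b r s, R a b r → R a b s → r = s) ∧
  (∀ a b r, R a b r → 0 < r) ∧
  (∀ a b c r s t, R a b r → R b c s → R a c t → t ≤ r + s)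

/-- A weight function `D` on `[V]²` is a full metric on `V`. -/
def IsFullMetricOn (V : Set X) (D : X → X → ℝ) : Prop :=
  (∀ a b, a ∈ V → b ∈ V → a ≠ b → D a b = D b a) ∧
  (∀ a b, a ∈ V → b ∈ V → a ≠ b → 0 < D a b) ∧
  (∀ a b c, a ∈ V → b ∈ V → c ∈ V → a ≠ b → b ≠ c → a ≠ c → D a c ≤ D a b + D b c)

/-- Player I has a winning strategy in the metric-extending game `Game_d(lam, Fam)`:
there are functions `S1, S2` choosing, for each inning `β < lam` and each sequence of
previous answers of player II, a legal doubleton in `[V]²` and a set from `Fam`, such that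
for every play of player II respecting the strategy, the resulting relation
`d ∪ {⟨x_α y_α, r_α⟩ : α < lam}` is a full metric on `V`. -/
def WinningStratI (V : Set X) (E : X → X → Prop) (d : X → X → ℝ)
    (lam : Ordinal.{u}) (Fam : Set (Set ℝ)) : Prop :=
  ∃ (S1 : ∀ β : Ordinal.{u}, β < lam → (∀ α : Ordinal.{u}, α < β → ℝ) → X × X)
    (S2 : ∀ β : Ordinal.{u}, β < lam → (∀ α : Ordinal.{u}, α < β → ℝ) → Set ℝ),
    (∀ β hβ s, S2 β hβ s ∈ Fam) ∧
    (∀ β hβ s, (S1 β hβ s).1 ∈ V ∧ (S1 β hβ s).2 ∈ V ∧ (S1 β hβ s).1 ≠ (S1 β hβ s).2) ∧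
    (∀ s : ∀ α : Ordinal.{u}, α < lam → ℝ,
      (∀ α (hα : α < lam), s α hα ∈ S2 α hα (fun γ hγ => s γ (hγ.trans hα))) →
      IsFullMetricRel V (fun a b r =>
        (E a b ∧ r = d a b) ∨
        ∃ α, ∃ hα : α < lam,
          ((a = (S1 α hα (fun γ hγ => s γ (hγ.trans hα))).1 ∧
            b = (S1 α hα (fun γ hγ => s γ (hγ.trans hα))).2) ∨
           (a = (S1 α hα (fun γ hγ => s γ (hγ.trans hα))).2 ∧
            b = (S1 α hα (fun γ hγ => s γ (hγ.trans hα))).1)) ∧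
          r = s α hα))

/-- Player II has a winning strategy in the metric-extending game `Game_d(lam, Fam)`:
there is a function `T` assigning to each inning `β < lam` and each sequence of moves of
player I (of length `β + 1`) an answer in the set component of the last move, such that
for every legal play of player I, the resulting relation is not a full metric on `V`. -/
def WinningStratII (V : Set X) (E : X → X → Prop) (d : X → X → ℝ)
    (lam : Ordinal.{u}) (Fam : Set (Set ℝ)) : Prop :=
  ∃ T : ∀ β : Ordinal.{u}, β < lam → (∀ α : Ordinal.{u}, α ≤ β → (X × X) × Set ℝ) → ℝ,
    (∀ β hβ p, (p β le_rfl).2 ∈ Fam → T β hβ p ∈ (p β le_rfl).2) ∧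
    (∀ p : ∀ α : Ordinal.{u}, α < lam → (X × X) × Set ℝ,
      (∀ α hα, (p α hα).1.1 ∈ V ∧ (p α hα).1.2 ∈ V ∧ (p α hα).1.1 ≠ (p α hα).1.2 ∧
        (p α hα).2 ∈ Fam) →
      ¬ IsFullMetricRel V (fun a b r =>
        (E a b ∧ r = d a b) ∨
        ∃ α, ∃ hα : α < lam,
          ((a = (p α hα).1.1 ∧ b = (p α hα).1.2) ∨
           (a = (p α hα).1.2 ∧ b = (p α hα).1.1)) ∧
          r = T α hα (fun γ hγ => p γ (lt_of_le_of_lt hγ hα))))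

/-- The edge relation of the glued graph `E_d = E_p ∪ ⋃_{f ∈ F} E_f`. -/
def gluedEdge (Ep : X → X → Prop) (F : Set ((X → X → Prop) × (X → X → ℝ))) :
    X → X → Prop :=
  fun a b => Ep a b ∨ ∃ f ∈ F, f.1 a b

/-- `Λ(v; B) = inf {d̂(a,v) + d̂(v,b) - d̂(a,b) : a, b ∈ B}`. -/
noncomputable def Lam (E : X → X → Prop) (d : X → X → ℝ) (v : X) (B : Set X) : ℝ :=
  sInf {r | ∃ a ∈ B, ∃ b ∈ B, r = hatd E d a v + hatd E d v b - hatd E d a b}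

/-- The gluing setup: a graph pseudometric `p = (Ep, wp)` and a family `F` of graph
pseudometrics such that each member meets `V_p`, agrees with `p̂` on the intersection of
the vertex sets, and distinct members only meet inside `V_p`; `wd` is the glued weight
function `d = p ∪ ⋃ F` on `E_d = E_p ∪ ⋃_{f ∈ F} E_f`. -/
structure GluingSetup (Ep : X → X → Prop) (wp : X → X → ℝ)
    (F : Set ((X → X → Prop) × (X → X → ℝ))) (wd : X → X → ℝ) : Prop where
  hp : IsGraphPseudometric Ep wp
  hF : ∀ f ∈ F, IsGraphPseudometric f.1 f.2
  meet : ∀ f ∈ F, (Vtx f.1 ∩ Vtx Ep).Nonempty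
  agree : ∀ f ∈ F, ∀ x ∈ Vtx f.1 ∩ Vtx Ep, ∀ y ∈ Vtx f.1 ∩ Vtx Ep, x ≠ y →
    hatd f.1 f.2 x y = hatd Ep wp x y
  inter_sub : ∀ f ∈ F, ∀ g ∈ F, f ≠ g → Vtx f.1 ∩ Vtx g.1 ⊆ Vtx Ep
  wd_p : ∀ ⦃a b⦄, Ep a b → wd a b = wp a b
  wd_F : ∀ f ∈ F, ∀ ⦃a b⦄, f.1 a b → wd a b = f.2 a b


section WalkSums

variable {E : X → X → Prop} {d : X → X → ℝ}

theorem zero_mem_walkSums (a : X) : (0 : ℝ) ∈ walkSums E d a a :=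
  ⟨0, fun _ => a, rfl, rfl, fun i hi => absurd hi (Nat.not_lt_zero i), by simp⟩

theorem cons_mem_walkSums {a b c : X} {s : ℝ} (hab : E a b) (hs : s ∈ walkSums E d b c) :
    d a b + s ∈ walkSums E d a c := by
  obtain ⟨n, p, h0, hn, hp, rfl⟩ := hs
  refine ⟨n + 1, fun i => Nat.casesOn i a p, rfl, hn, ?_, ?_⟩
  · rintro (_ | i) hi
    · simpa [h0] using hab
    · exact hp i (by omega)
  · rw [Finset.sum_range_succ', add_comm]
    simp [h0]

theorem walkSums_induction {v : X} {P : X → ℝ → Prop} (refl : P v 0)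
    (step : ∀ a b s, E a b → P b s → P a (d a b + s)) {u : X} {s : ℝ}
    (hs : s ∈ walkSums E d u v) : P u s := by
  obtain ⟨n, c, h0, hn, hc, rfl⟩ := hs
  induction n generalizing u c with
  | zero =>
    have huv : u = v := h0.symm.trans hn
    simpa [huv] using refl
  | succ n ih =>
    have hedge : E u (c 1) := by simpa [h0] using hc 0 (Nat.succ_pos n)
    have htail := ih (u := c 1) (fun i => c (i + 1)) rfl hn (fun i hi => hc (i + 1) (by omega))
    rw [Finset.sum_range_succ', add_comm]
    simpa [h0] using step u (c 1) _ hedge htail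

theorem append_mem_walkSums {a b c : X} {s t : ℝ} (hs : s ∈ walkSums E d a b)
    (ht : t ∈ walkSums E d b c) : s + t ∈ walkSums E d a c :=
  walkSums_induction (P := fun a s => s + t ∈ walkSums E d a c) (by simpa using ht)
    (fun a b s hab h => by simpa [add_assoc] using cons_mem_walkSums hab h) hs

theorem edge_mem_walkSums {a b : X} (hab : E a b) : d a b ∈ walkSums E d a b := by
  simpa using cons_mem_walkSums hab (zero_mem_walkSums b)

theorem symm_mem_walkSums (hE : ∀ ⦃a b⦄, E a b → E b a)
    (hw : ∀ ⦃a b⦄, E a b → d a b = d b a) {a b : X} {s : ℝ}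
    (hs : s ∈ walkSums E d a b) : s ∈ walkSums E d b a :=
  walkSums_induction (P := fun a s => s ∈ walkSums E d b a) (zero_mem_walkSums b)
    (fun a c s hac h => by
      rw [hw hac, add_comm]
      exact append_mem_walkSums h (edge_mem_walkSums (hE hac))) hs

theorem hatd_symm (hE : ∀ ⦃a b⦄, E a b → E b a) (hw : ∀ ⦃a b⦄, E a b → d a b = d b a)
    (a b : X) : hatd E d a b = hatd E d b a :=
  congrArg sInf (Set.ext fun _ => ⟨symm_mem_walkSums hE hw, symm_mem_walkSums hE hw⟩)

theorem nonneg_of_mem_walkSums (hnn : ∀ ⦃a b⦄, E a b → 0 ≤ d a b) {a b : X} {s : ℝ}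
    (hs : s ∈ walkSums E d a b) : 0 ≤ s :=
  walkSums_induction (P := fun _ s => 0 ≤ s) le_rfl
    (fun _ _ _ hab h => add_nonneg (hnn hab) h) hs

theorem bddBelow_walkSums (hnn : ∀ ⦃a b⦄, E a b → 0 ≤ d a b) (a b : X) :
    BddBelow (walkSums E d a b) :=
  ⟨0, fun _ hs => nonneg_of_mem_walkSums hnn hs⟩

theorem hatd_nonneg (hnn : ∀ ⦃a b⦄, E a b → 0 ≤ d a b) (a b : X) : 0 ≤ hatd E d a b :=
  Real.sInf_nonneg fun _ hs => nonneg_of_mem_walkSums hnn hs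

theorem hatd_le_of_mem (hnn : ∀ ⦃a b⦄, E a b → 0 ≤ d a b) {a b : X} {s : ℝ}
    (hs : s ∈ walkSums E d a b) : hatd E d a b ≤ s :=
  csInf_le (bddBelow_walkSums hnn a b) hs

theorem hatd_self (hnn : ∀ ⦃a b⦄, E a b → 0 ≤ d a b) (a : X) : hatd E d a a = 0 :=
  le_antisymm (hatd_le_of_mem hnn (zero_mem_walkSums a)) (hatd_nonneg hnn a a)

/-- A function that drops by at most `d a b` along every edge `ab` and is nonpositive at `v` is
bounded above by the distance to `v`. -/
theorem le_hatd_of_step (hne : ∀ a b, (walkSums E d a b).Nonempty) {v : X} {f : X → ℝ}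
    (hv : f v ≤ 0) (hstep : ∀ a b, E a b → f a ≤ d a b + f b) (u : X) :
    f u ≤ hatd E d u v :=
  le_csInf (hne u v) fun _ hs =>
    walkSums_induction (P := fun a s => f a ≤ s) hv
      (fun a b s hab h => (hstep a b hab).trans (by gcongr)) hs

theorem hatd_le_edge_add (hnn : ∀ ⦃a b⦄, E a b → 0 ≤ d a b)
    (hne : ∀ a b, (walkSums E d a b).Nonempty) {a b : X} (hab : E a b) (c : X) :
    hatd E d a c ≤ d a b + hatd E d b c := by
  have h : hatd E d a c - d a b ≤ hatd E d b c := le_csInf (hne b c) fun s hs => by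
    linarith [hatd_le_of_mem hnn (cons_mem_walkSums hab hs)]
  linarith

theorem hatd_triangle (hnn : ∀ ⦃a b⦄, E a b → 0 ≤ d a b)
    (hne : ∀ a b, (walkSums E d a b).Nonempty) (a b c : X) :
    hatd E d a c ≤ hatd E d a b + hatd E d b c := by
  have h := le_hatd_of_step hne (v := b) (f := fun a => hatd E d a c - hatd E d b c)
    (sub_self _).le
    (fun a a' haa' => by linarith [hatd_le_edge_add hnn hne haa' c]) a
  linarith

end WalkSums

theorem checkd_nonneg (E : X → X → Prop) (d : X → X → ℝ) (x y : X) : 0 ≤ checkd E d x y :=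
  Real.sSup_nonneg' ⟨0, Or.inl rfl, le_rfl⟩

theorem IsGraphPseudometric.walkSums_nonempty {E : X → X → Prop} {d : X → X → ℝ}
    (hd : IsGraphPseudometric E d) (hvert : ∀ z : X, z ∈ Vtx E) (a b : X) :
    (walkSums E d a b).Nonempty := by
  obtain ⟨n, c, h0, hn, hc⟩ := hd.connected a (hvert a) b (hvert b)
  exact ⟨_, n, c, h0, hn, hc, rfl⟩

theorem extWt_of_edge {E : X → X → Prop} (hE : ∀ ⦃a b⦄, E a b → E b a) (d : X → X → ℝ)
    {x y : X} (hnE : ¬ E x y) (r : ℝ) {a b : X} (hab : E a b) :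
    extWt d x y r a b = d a b := by
  refine if_neg ?_
  rintro (⟨rfl, rfl⟩ | ⟨rfl, rfl⟩)
  · exact hnE hab
  · exact hnE (hE hab)

theorem walkSums_subset_ext {E : X → X → Prop} (hE : ∀ ⦃a b⦄, E a b → E b a) (d : X → X → ℝ)
    {x y : X} (hnE : ¬ E x y) (r : ℝ) (u v : X) :
    walkSums E d u v ⊆ walkSums (extEdge E x y) (extWt d x y r) u v := fun _ hs =>
  walkSums_induction (P := fun a s => s ∈ walkSums (extEdge E x y) (extWt d x y r) a v)
    (zero_mem_walkSums v)
    (fun a b s hab h => by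
      rw [← extWt_of_edge hE d hnE r hab]
      exact cons_mem_walkSums (Or.inl hab) h) hs

/-- The shortest-path pseudometric of a one-step extension: either the new edge is not used, or
it is used exactly once. -/
theorem hatd_ext_eq_min {E : X → X → Prop} {d : X → X → ℝ}
    (hd : IsGraphPseudometric E d) (hvert : ∀ z : X, z ∈ Vtx E)
    {x y : X} (hnE : ¬ E x y) {r : ℝ} (hr : 0 ≤ r) (u v : X) :
    hatd (extEdge E x y) (extWt d x y r) u v =
      min (hatd E d u v) (r + ddot E d x y u v) := by
  have hne := hd.walkSums_nonempty hvert
  have hsub := walkSums_subset_ext hd.symm d hnE r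
  have hwxy : extWt d x y r x y = r := if_pos (Or.inl ⟨rfl, rfl⟩)
  have hwyx : extWt d x y r y x = r := if_pos (Or.inr ⟨rfl, rfl⟩)
  have hexy : extEdge E x y x y := Or.inr (Or.inl ⟨rfl, rfl⟩)
  have heyx : extEdge E x y y x := Or.inr (Or.inr ⟨rfl, rfl⟩)
  have hnn' : ∀ ⦃a b⦄, extEdge E x y a b → 0 ≤ extWt d x y r a b := by
    rintro a b (hab | ⟨rfl, rfl⟩ | ⟨rfl, rfl⟩)
    · rw [extWt_of_edge hd.symm d hnE r hab]
      exact hd.nonneg hab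
    · rwa [hwxy]
    · rwa [hwyx]
  have hne' := fun a b => (hne a b).mono (hsub a b)
  have hsymm := hatd_symm hd.symm hd.wt_symm
  have htri := hatd_triangle hd.nonneg hne
  have hself := hatd_self hd.nonneg
  have hpos := hatd_nonneg hd.nonneg
  apply le_antisymm
  · have hle : ∀ a b, hatd (extEdge E x y) (extWt d x y r) a b ≤ hatd E d a b := fun a b =>
      csInf_le_csInf (bddBelow_walkSums hnn' a b) (hne a b) (hsub a b)
    have htri' := hatd_triangle hnn' hne'
    have hxv := hatd_le_edge_add hnn' hne' hexy v
    have hyv := hatd_le_edge_add hnn' hne' heyx v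
    rw [hwxy] at hxv
    rw [hwyx] at hyv
    refine le_min (hle u v) ?_
    rw [ddot, ← min_add_add_left]
    refine le_min ?_ ?_
    · linarith [htri' u x v, hle u x, hle y v, hsymm u x]
    · linarith [htri' u y v, hle u y, hle x v, hsymm u y]
  · refine le_hatd_of_step hne' (f := fun a => min (hatd E d a v) (r + ddot E d x y a v))
      ((min_le_left _ _).trans (hself v).le) ?_ u
    intro a b hab
    simp only [ddot, ← min_add_add_left]
    rcases hab with hab | ⟨rfl, rfl⟩ | ⟨rfl, rfl⟩
    · rw [extWt_of_edge hd.symm d hnE r hab]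
      have h : ∀ c, hatd E d c a ≤ d a b + hatd E d c b := fun c => by
        rw [hsymm c a, hsymm c b]
        exact hatd_le_edge_add hd.nonneg hne hab c
      refine min_le_min ?_ (min_le_min ?_ ?_)
      · exact hatd_le_edge_add hd.nonneg hne hab v
      · linarith [h x]
      · linarith [h y]
    · rw [hwxy]
      refine le_min ?_ (le_min ?_ ?_)
      · exact (min_le_right _ _).trans ((min_le_left _ _).trans (by linarith [hself a]))
      · exact (min_le_right _ _).trans
          ((min_le_left _ _).trans (by linarith [hself a, hpos a b]))
      · exact (min_le_left _ _).trans (by linarith [hself b])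
    · rw [hwyx]
      refine le_min ?_ (le_min ?_ ?_)
      · exact (min_le_right _ _).trans ((min_le_right _ _).trans (by linarith [hself a]))
      · exact (min_le_left _ _).trans (by linarith [hself b])
      · exact (min_le_right _ _).trans
          ((min_le_right _ _).trans (by linarith [hself a, hpos a b]))

/-- With `D = d ∪ {⟨xy, r⟩}` for `ď(x,y) ≤ r ≤ d̂(x,y)`: whenever
`d̂(u,v) ≠ D̂(u,v)`, we have `D̂(u,v) = r + d̈(xy,uv)` and
`d̂(u,v) − (d̂(x,y) − r) ≤ D̂(u,v)`. -/
theorem one_step_extension_estimates₂ (E : X → X → Prop) (d : X → X → ℝ)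
    (hd : IsGraphPseudometric E d) (hvert : ∀ z : X, z ∈ Vtx E)
    (x y : X) (hxy : x ≠ y) (hnE : ¬ E x y) (r : ℝ)
    (hr₁ : checkd E d x y ≤ r) (hr₂ : r ≤ hatd E d x y) :
    ∀ u v : X, hatd E d u v ≠ hatd (extEdge E x y) (extWt d x y r) u v →
      hatd (extEdge E x y) (extWt d x y r) u v = r + ddot E d x y u v ∧
      hatd E d u v - (hatd E d x y - r) ≤ hatd (extEdge E x y) (extWt d x y r) u v := by
  intro u v huv
  have hr : 0 ≤ r := (checkd_nonneg E d x y).trans hr₁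
  have hmin := hatd_ext_eq_min hd hvert hnE hr u v
  have heq : hatd (extEdge E x y) (extWt d x y r) u v = r + ddot E d x y u v := by
    rcases min_choice (hatd E d u v) (r + ddot E d x y u v) with h | h
    · exact absurd (hmin.trans h).symm huv
    · exact hmin.trans h
  refine ⟨heq, ?_⟩
  have hsymm := hatd_symm hd.symm hd.wt_symm
  have htri := hatd_triangle hd.nonneg (hd.walkSums_nonempty hvert)
  have hbound : hatd E d u v - hatd E d x y ≤ ddot E d x y u v := by
    refine le_min ?_ ?_
    · linarith [htri u x v, htri x y v, hsymm u x]
    · linarith [htri u y v, htri y x v, hsymm u y, hsymm y x]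
  linarith

end GraphMetricPaper
end

section
/- In the gluing setup, for every n ∈ ℕ and every sequence of vertices x₀, x₁, …, xₙ ∈ V_d with x₀, xₙ ∈ V_p and x_{i-1}x_i ∈ E_d for all 0 < i ≤ n, we have p̂(x₀,xₙ) ≤ Σ_{i=1}^n d(x_{i-1}x_i). -/
open scoped Classical

universe u

namespace GraphMetricPaper

variable {X : Type u}

/-- Concatenation of walks adds their weights. -/
lemma add_mem_walkSums {E : X → X → Prop} {d : X → X → ℝ} {x y z : X} {s t : ℝ}
    (hs : s ∈ walkSums E d x y) (ht : t ∈ walkSums E d y z) : s + t ∈ walkSums E d x z := by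
  obtain ⟨n, a, ha0, han, haE, rfl⟩ := hs
  obtain ⟨m, b, hb0, hbm, hbE, rfl⟩ := ht
  have hl : ∀ i, i ≤ n → (fun i => if i ≤ n then a i else b (i - n)) i = a i :=
    fun i hi => if_pos hi
  have hr : ∀ i, (fun i => if i ≤ n then a i else b (i - n)) (n + i) = b i := by
    intro i
    rcases Nat.eq_zero_or_pos i with rfl | hi
    · simp [han, hb0]
    · simp [hi.ne']
  generalize (fun i => if i ≤ n then a i else b (i - n)) = c at hl hr
  refine ⟨n + m, c, by rw [hl 0 n.zero_le, ha0], by rw [hr, hbm], fun i hi => ?_, ?_⟩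
  · rcases lt_or_ge i n with hin | hin
    · rw [hl i hin.le, hl (i + 1) hin]
      exact haE i hin
    · obtain ⟨k, rfl⟩ := Nat.exists_eq_add_of_le hin
      rw [add_assoc, hr, hr]
      exact hbE k (by omega)
  · rw [Finset.sum_range_add]
    congr 1
    · refine Finset.sum_congr rfl fun i hi => ?_
      have hin := Finset.mem_range.1 hi
      rw [hl i hin.le, hl (i + 1) hin]
    · refine Finset.sum_congr rfl fun i _ => ?_
      rw [add_assoc, hr, hr]

namespace IsGraphPseudometric

variable {E : X → X → Prop} {d : X → X → ℝ}

lemma walkSums_nonneg (h : IsGraphPseudometric E d) {x y : X} {s : ℝ}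
    (hs : s ∈ walkSums E d x y) : 0 ≤ s := by
  obtain ⟨n, c, -, -, hE, rfl⟩ := hs
  exact Finset.sum_nonneg fun i hi => h.nonneg (hE i (Finset.mem_range.1 hi))

lemma hatd_le (h : IsGraphPseudometric E d) {x y : X} {s : ℝ}
    (hs : s ∈ walkSums E d x y) : hatd E d x y ≤ s :=
  csInf_le ⟨0, fun _ ht => h.walkSums_nonneg ht⟩ hs

lemma hatd_self_le (h : IsGraphPseudometric E d) (x : X) : hatd E d x x ≤ 0 :=
  h.hatd_le ⟨0, fun _ => x, rfl, rfl, by simp, by simp⟩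

lemma walkSums_nonempty_s12 (h : IsGraphPseudometric E d) {x y : X} (hx : x ∈ Vtx E)
    (hy : y ∈ Vtx E) : (walkSums E d x y).Nonempty := by
  obtain ⟨n, c, h0, hn, hE⟩ := h.connected x hx y hy
  exact ⟨_, n, c, h0, hn, hE, rfl⟩

lemma hatd_triangle (h : IsGraphPseudometric E d) {x y z : X} (hx : x ∈ Vtx E)
    (hy : y ∈ Vtx E) (hz : z ∈ Vtx E) :
    hatd E d x z ≤ hatd E d x y + hatd E d y z := by
  refine le_of_forall_pos_le_add fun ε hε => ?_
  obtain ⟨s, hs, hsε⟩ := Real.lt_sInf_add_pos (h.walkSums_nonempty_s12 hx hy) (half_pos hε)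
  obtain ⟨t, ht, htε⟩ := Real.lt_sInf_add_pos (h.walkSums_nonempty_s12 hy hz) (half_pos hε)
  have hst := h.hatd_le (add_mem_walkSums hs ht)
  simp only [hatd] at hst ⊢
  linarith

end IsGraphPseudometric

/-- The bound for a nontrivial walk whose interior vertices avoid `V_p`. -/
lemma GluingSetup.hatd_le_of_interior_notMem {Ep : X → X → Prop} {wp : X → X → ℝ}
    {F : Set ((X → X → Prop) × (X → X → ℝ))} {wd : X → X → ℝ}
    (hs : GluingSetup Ep wp F wd) {m : ℕ} (hm : 0 < m) {c : ℕ → X}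
    (h₀ : c 0 ∈ Vtx Ep) (hₘ : c m ∈ Vtx Ep)
    (hint : ∀ i, 0 < i → i < m → c i ∉ Vtx Ep)
    (hedge : ∀ i, i < m → gluedEdge Ep F (c i) (c (i + 1))) :
    hatd Ep wp (c 0) (c m) ≤ ∑ i ∈ Finset.range m, wd (c i) (c (i + 1)) := by
  rcases hedge 0 hm with hp | ⟨f, hf, hf0⟩
  · obtain rfl : m = 1 := by
      by_contra hne
      exact hint 1 one_pos (by omega) ⟨_, hs.hp.symm hp⟩
    rw [Finset.sum_range_one, hs.wd_p hp, hs.hp.edge_eq hp]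
  · have hfE : ∀ i, i < m → f.1 (c i) (c (i + 1)) := by
      intro i
      induction i with
      | zero => exact fun _ => hf0
      | succ i ih =>
        intro hi
        have hv : c (i + 1) ∉ Vtx Ep := hint _ i.succ_pos hi
        rcases hedge (i + 1) hi with hp | ⟨g, hg, hgE⟩
        · exact absurd ⟨_, hp⟩ hv
        · obtain rfl : f = g := by
            by_contra hne
            exact hv (hs.inter_sub f hf g hg hne
              ⟨⟨_, (hs.hF f hf).symm (ih (by omega))⟩, ⟨_, hgE⟩⟩)
          exact hgE
    have hmem : ∑ i ∈ Finset.range m, wd (c i) (c (i + 1)) ∈ walkSums f.1 f.2 (c 0) (c m) :=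
      ⟨m, c, rfl, rfl, hfE, Finset.sum_congr rfl fun i hi =>
        hs.wd_F f hf (hfE i (Finset.mem_range.1 hi))⟩
    by_cases hne : c 0 = c m
    · rw [← hne]
      exact (hs.hp.hatd_self_le _).trans ((hs.hF f hf).walkSums_nonneg hmem)
    · have hfm : c m ∈ Vtx f.1 := by
        obtain ⟨k, rfl⟩ := Nat.exists_eq_add_of_lt hm
        exact ⟨_, (hs.hF f hf).symm (by simpa using hfE k (by omega))⟩
      rw [← hs.agree f hf _ ⟨⟨_, hf0⟩, h₀⟩ _ ⟨hfm, hₘ⟩ hne]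
      exact (hs.hF f hf).hatd_le hmem

/-- In the gluing setup, for every `n` and vertices
`x₀, …, xₙ ∈ V_d` with `x₀, xₙ ∈ V_p` and `x_{i-1}x_i ∈ E_d`, we have
`p̂(x₀, xₙ) ≤ Σ_{i=1}^n d(x_{i-1}x_i)`. -/
theorem gluing_path_bound (Ep : X → X → Prop) (wp : X → X → ℝ)
    (F : Set ((X → X → Prop) × (X → X → ℝ))) (wd : X → X → ℝ)
    (hs : GluingSetup Ep wp F wd) (n : ℕ) (c : ℕ → X)
    (h₀ : c 0 ∈ Vtx Ep) (hₙ : c n ∈ Vtx Ep)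
    (hedge : ∀ i, i < n → gluedEdge Ep F (c i) (c (i + 1))) :
    hatd Ep wp (c 0) (c n) ≤ ∑ i ∈ Finset.range n, wd (c i) (c (i + 1)) := by
  induction n using Nat.strong_induction_on generalizing c with
  | _ n ih =>
    rcases Nat.eq_zero_or_pos n with rfl | hn
    · simpa using hs.hp.hatd_self_le (c 0)
    have hex : ∃ m, 0 < m ∧ c m ∈ Vtx Ep := ⟨n, hn, hₙ⟩
    obtain ⟨m, ⟨hm, hcm⟩, hmin⟩ : ∃ m, (0 < m ∧ c m ∈ Vtx Ep) ∧
        ∀ k < m, ¬ (0 < k ∧ c k ∈ Vtx Ep) :=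
      ⟨Nat.find hex, Nat.find_spec hex, fun _ => Nat.find_min hex⟩
    have hmn : m ≤ n := not_lt.1 fun h => hmin n h ⟨hn, hₙ⟩
    obtain ⟨k, rfl⟩ := Nat.exists_eq_add_of_le hmn
    have hhead := hs.hatd_le_of_interior_notMem hm h₀ hcm
      (fun i hi him hv => hmin i him ⟨hi, hv⟩) fun i hi => hedge i (by omega)
    have htail := ih k (by omega) (fun i => c (m + i)) hcm hₙ
      fun i hi => hedge (m + i) (by omega)
    rw [Finset.sum_range_add]
    exact (hs.hp.hatd_triangle h₀ hcm hₙ).trans (add_le_add hhead htail)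

end GraphMetricPaper
end
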